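/- Let n ≥ 1, let ψ : (0,∞) → ℝ be twice continuously differentiable with bounded support, and define η(s) = ψ(s)/s − ∫_s^∞ ψ(t)/t² dt for s > 0. Then for all i, l, m ∈ {1,…,n} and every x ∈ ℝ^n \ {0}, the second partial derivative ∂²/∂x_m ∂x_l of the function x ↦ η(|x|) x_i equals (ψ″(|x|)/|x|³ − 2ψ′(|x|)/|x|⁴) x_i x_l x_m + (ψ′(|x|)/|x|²)(δ_{lm} x_i + δ_{im} x_l + δ_{il} x_m). -/

import Mathlib

open MeasureTheory Filter Set

/-- A function `ζ : (0,∞) → ℝ` (modeled as `ℝ → ℝ`, values on nonpositive reals irrelevant)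
has bounded support. -/
def BddSupp (ζ : ℝ → ℝ) : Prop := ∃ R : ℝ, ∀ s, R ≤ s → ζ s = 0

section NormDerivative

variable {E : Type*} [NormedAddCommGroup E] [InnerProductSpace ℝ E]

/-- The derivative of the norm of a real inner product space away from the origin. -/
theorem hasFDerivAt_norm_of_ne_zero {x : E} (hx : x ≠ 0) :
    HasFDerivAt (fun y : E => ‖y‖) (‖x‖⁻¹ • innerSL ℝ x) x := by
  have h := (hasStrictFDerivAt_norm_sq x).hasFDerivAt.sqrt (pow_ne_zero 2 (norm_ne_zero_iff.2 hx))
  simp only [Real.sqrt_sq (norm_nonneg _)] at h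
  convert h using 1
  ext y
  simp
  field_simp

/-- The derivative of a radial function away from the origin. -/
theorem HasDerivAt.hasFDerivAt_comp_norm {f : ℝ → ℝ} {f' : ℝ} {x : E}
    (hf : HasDerivAt f f' ‖x‖) (hx : x ≠ 0) :
    HasFDerivAt (fun y : E => f ‖y‖) (f' • ‖x‖⁻¹ • innerSL ℝ x) x :=
  hf.comp_hasFDerivAt x (hasFDerivAt_norm_of_ne_zero hx)

end NormDerivative

/-- A continuous function on `(0,∞)` with bounded support is integrable on `(s,∞)` for `s > 0`. -/
theorem BddSupp.integrableOn_Ioi {f : ℝ → ℝ} (hb : BddSupp f) (hf : ContinuousOn f (Ioi 0))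
    {s : ℝ} (hs : 0 < s) : IntegrableOn f (Ioi s) := by
  obtain ⟨R, hR⟩ := hb
  have hcpt : IntegrableOn f (Icc s R) :=
    (hf.mono fun t ht => hs.trans_le ht.1).integrableOn_Icc
  have htail : IntegrableOn f (Ioi R) :=
    integrableOn_zero.congr_fun (fun t ht => (hR t (le_of_lt ht)).symm) measurableSet_Ioi
  refine (hcpt.union htail).mono_set fun t ht => ?_
  rcases le_or_gt t R with h | h
  · exact Or.inl ⟨le_of_lt ht, h⟩
  · exact Or.inr h

/-- The derivative of the tail integral of a continuous function with bounded support. -/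
theorem BddSupp.hasDerivAt_integral_Ioi {f : ℝ → ℝ} (hb : BddSupp f)
    (hf : ContinuousOn f (Ioi 0)) {s : ℝ} (hs : 0 < s) :
    HasDerivAt (fun u => ∫ t in Ioi u, f t) (-f s) s := by
  have hint : HasDerivAt (fun u => ∫ t in s..u, f t) (f s) s :=
    intervalIntegral.integral_hasDerivAt_right (by simp)
      (hf.stronglyMeasurableAtFilter isOpen_Ioi s hs) (hf.continuousAt (Ioi_mem_nhds hs))
  refine (hint.const_sub (∫ t in Ioi s, f t)).congr_of_eventuallyEq ?_
  filter_upwards [Ioi_mem_nhds hs] with u hu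
  rw [← intervalIntegral.integral_Ioi_sub_Ioi' (hb.integrableOn_Ioi hf hs)
    (hb.integrableOn_Ioi hf hu)]
  ring

/-- The function `η(s) = ψ(s)/s − ∫_s^∞ ψ(t)/t² dt` satisfies `η' = ψ'/s`. -/
theorem BddSupp.hasDerivAt_div_sub_integral_Ioi {ψ η : ℝ → ℝ} (hb : BddSupp ψ)
    (hψ : DifferentiableOn ℝ ψ (Ioi 0))
    (hη : ∀ s > (0:ℝ), η s = ψ s / s - ∫ t in Ioi s, ψ t / t ^ 2) {s : ℝ} (hs : 0 < s) :
    HasDerivAt η (deriv ψ s / s) s := by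
  have hb' : BddSupp fun t => ψ t / t ^ 2 := by
    obtain ⟨R, hR⟩ := hb
    exact ⟨R, fun t ht => by simp [hR t ht]⟩
  have hc : ContinuousOn (fun t => ψ t / t ^ 2) (Ioi 0) :=
    hψ.continuousOn.div (by fun_prop) fun t ht => pow_ne_zero 2 (ne_of_gt ht)
  have hd : HasDerivAt ψ (deriv ψ s) s :=
    (hψ.differentiableAt (Ioi_mem_nhds hs)).hasDerivAt
  have h := (hd.div (hasDerivAt_id s) hs.ne').sub (hb'.hasDerivAt_integral_Ioi hc hs)
  have h' := h.congr_of_eventuallyEq (f₁ := η) (by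
    filter_upwards [Ioi_mem_nhds hs] with u hu using hη u hu)
  refine h'.congr_deriv ?_
  simp only [id]
  field_simp
  ring

/-- The coordinate functions of Euclidean space are their own derivatives. -/
theorem EuclideanSpace.hasFDerivAt_apply {ι : Type*} [Fintype ι] (i : ι)
    (x : EuclideanSpace ℝ ι) :
    HasFDerivAt (fun y : EuclideanSpace ℝ ι => y i)
      (EuclideanSpace.proj i : EuclideanSpace ℝ ι →L[ℝ] ℝ) x :=
  (EuclideanSpace.proj i : EuclideanSpace ℝ ι →L[ℝ] ℝ).hasFDerivAt

/-- First partial derivatives of a radial function times a coordinate. -/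
theorem fderiv_radial_mul_coord_single {ι : Type*} [Fintype ι] [DecidableEq ι] {f : ℝ → ℝ}
    {f' : ℝ} {x : EuclideanSpace ℝ ι} (hf : HasDerivAt f f' ‖x‖) (hx : x ≠ 0) (i l : ι) :
    fderiv ℝ (fun z : EuclideanSpace ℝ ι => f ‖z‖ * z i) x (EuclideanSpace.single l 1) =
      f' / ‖x‖ * (x l * x i) + f ‖x‖ * (if i = l then (1:ℝ) else 0) := by
  rw [((hf.hasFDerivAt_comp_norm hx).fun_mul (EuclideanSpace.hasFDerivAt_apply i x)).fderiv]
  simp [EuclideanSpace.inner_single_right]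
  ring

/-- Second partial derivatives `∂²/∂x_m ∂x_l` of the map `x ↦ η(|x|) xᵢ` on `ℝⁿ \ {0}`,
where `η = 𝓡⁻¹ψ`, i.e. `η(s) = ψ(s)/s − ∫_s^∞ ψ(t)/t² dt`. -/
theorem stmt15 (n : ℕ) (hn : 1 ≤ n) (ψ : ℝ → ℝ) (hψ : ContDiffOn ℝ 2 ψ (Set.Ioi 0))
    (hb : BddSupp ψ) (η : ℝ → ℝ)
    (hη : ∀ s > (0:ℝ), η s = ψ s / s - ∫ t in Set.Ioi s, ψ t / t ^ 2)
    (i l m : Fin n) (x : EuclideanSpace ℝ (Fin n)) (hx : x ≠ 0) :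
    fderiv ℝ
        (fun y : EuclideanSpace ℝ (Fin n) =>
          fderiv ℝ (fun z : EuclideanSpace ℝ (Fin n) => η ‖z‖ * z i) y
            (EuclideanSpace.single l 1))
        x (EuclideanSpace.single m 1) =
      (deriv (deriv ψ) ‖x‖ / ‖x‖ ^ 3 - 2 * deriv ψ ‖x‖ / ‖x‖ ^ 4) * x i * x l * x m +
        deriv ψ ‖x‖ / ‖x‖ ^ 2 *
          ((if l = m then (1:ℝ) else 0) * x i + (if i = m then (1:ℝ) else 0) * x l +
            (if i = l then (1:ℝ) else 0) * x m) := by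
  have hdψ : DifferentiableOn ℝ ψ (Ioi 0) := hψ.differentiableOn (by norm_num)
  have hdη : ∀ s > (0:ℝ), HasDerivAt η (deriv ψ s / s) s := fun s hs =>
    hb.hasDerivAt_div_sub_integral_Ioi hdψ hη hs
  have hr : 0 < ‖x‖ := norm_pos_iff.2 hx
  have hd2 : HasDerivAt (deriv ψ) (deriv (deriv ψ) ‖x‖) ‖x‖ :=
    (((hψ.deriv_of_isOpen (m := 1) isOpen_Ioi (by norm_num)).differentiableOn
      (by norm_num)).differentiableAt (Ioi_mem_nhds hr)).hasDerivAt
  have hfirst : (fun y : EuclideanSpace ℝ (Fin n) =>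
      fderiv ℝ (fun z : EuclideanSpace ℝ (Fin n) => η ‖z‖ * z i) y (EuclideanSpace.single l 1))
      =ᶠ[nhds x] fun y => deriv ψ ‖y‖ / ‖y‖ / ‖y‖ * (y l * y i) +
        η ‖y‖ * (if i = l then (1:ℝ) else 0) := by
    filter_upwards [isOpen_ne.mem_nhds hx] with y hy
    exact fderiv_radial_mul_coord_single (hdη _ (norm_pos_iff.2 hy)) hy i l
  have hquot := (hd2.div (hasDerivAt_id _) hr.ne').div (hasDerivAt_id _) hr.ne'
  have hsecond := ((hquot.hasFDerivAt_comp_norm hx).mul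
    ((EuclideanSpace.hasFDerivAt_apply l x).mul (EuclideanSpace.hasFDerivAt_apply i x))).add
    (((hdη _ hr).hasFDerivAt_comp_norm hx).mul_const (if i = l then (1:ℝ) else 0))
  rw [(hsecond.congr_of_eventuallyEq hfirst).fderiv]
  have hδl : (if l = m then (1:ℝ) else 0) = EuclideanSpace.single m (1:ℝ) l := by simp
  have hδi : (if i = m then (1:ℝ) else 0) = EuclideanSpace.single m (1:ℝ) i := by simp
  rw [hδl, hδi]
  generalize (if i = l then (1:ℝ) else 0) = d
  simp only [add_apply, smul_apply, innerSL_apply_apply, EuclideanSpace.inner_single_right,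
    PiLp.proj_apply, Pi.div_apply, Pi.mul_apply, id, smul_eq_mul, conj_trivial]
  field_simp
  ring
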